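/- arXiv:2306.08104 — 2 statements merged into one kernel-verified Lean document; each statement's English description precedes it below -/
import Mathlib

section
/- Let r ≥ 1, d ≥ 2, n_1,…,n_d ≥ 1, X = ℙ^{n_1}×⋯×ℙ^{n_d} with Cox ring S and irrelevant ideal B(X) as in the context. Fix i ∈ {1,…,d} and let ℰ_i = {u ∈ ℕ^d : u_i ≤ 1}. Then for every B(X)-saturated homogeneous ideal I ⊆ S with H_{S/I} = h_{r,X}, one has I = ((I_{ℰ_i}) : B(X)^∞), where (I_{ℰ_i}) denotes the ideal of S generated by ⋃_{u ∈ ℰ_i} I_u. -/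
/-!
It is enough to show that every `f ∈ I_u` lies in the saturation of `J = (I_{ℰ_i})`. Pick `j ≠ i`.
Multiplying `f` by `B(X)^r` lands in degrees whose `j`-th coordinate is at least `r`, so the point
is that `I_w ⊆ J` for all `w` with `w_j ≥ r` (`idealPiece_le_of_large`).

In such degrees `dim S_w ≥ r` (`le_finrank_coxPiece`), so `S/I` has Hilbert function equal to `r`.
By saturation and prime avoidance there is a form `l` of degree `e_i` that is a nonzerodivisor on
`S/I` (`exists_linear_nonzerodivisor`). Multiplication by `l` from `(S/I)_v` to `(S/I)_{v + e_i}` is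
injective between spaces of dimension `r`, whence `S_{v + e_i} = I_{v + e_i} + l S_v`
(`coxPiece_le_sup`). This gives `I_{w + e_i} = S_{e_i} I_w` for `w = v + e_i`: an element of
`I_{w + e_i}` is a sum of products `α_{ij} g` with `g = p + l h`, `p ∈ I_w`, `h ∈ S_v`. Modulo
`S_{e_i} I_w` it is thus `l h'` with `h' ∈ S_w`, and `l h' ∈ I` forces `h' ∈ I_w`. Induction on
`w_i`, starting from `w_i ≤ 1`, concludes.
-/

open MvPolynomial

noncomputable section

/-- The saturation `(I : B^∞) = {f ∈ S : f·B^k ⊆ I for some k ≥ 0}`, as a set. -/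
def satSet {R : Type*} [CommRing R] (I B : Ideal R) : Set R :=
  {x | ∃ k : ℕ, ∀ g ∈ B ^ k, x * g ∈ I}

/-- The variables of the Cox ring of `X = ℙ^{n_1}×⋯×ℙ^{n_d}`. -/
abbrev PPVars (d : ℕ) (n : Fin d → ℕ) : Type := Σ i : Fin d, Fin (n i + 1)

/-- The ℤ^d-grading: `deg α_{ij} = e_i`. -/
def wPP (d : ℕ) (n : Fin d → ℕ) : PPVars d n → (Fin d → ℕ) := fun p => Pi.single p.1 1

/-- The degree-`u` component `S_u` of the Cox ring. -/
def coxPiece (d : ℕ) (n : Fin d → ℕ) (u : Fin d → ℕ) :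
    Submodule ℂ (MvPolynomial (PPVars d n) ℂ) :=
  weightedHomogeneousSubmodule ℂ (wPP d n) u

/-- The degree-`u` graded piece `I_u = I ∩ S_u` of an ideal. -/
def idealPiece (d : ℕ) (n : Fin d → ℕ) (I : Ideal (MvPolynomial (PPVars d n) ℂ))
    (u : Fin d → ℕ) : Submodule ℂ (MvPolynomial (PPVars d n) ℂ) :=
  Submodule.restrictScalars ℂ I ⊓ coxPiece d n u

/-- A homogeneous ideal: `I = ⊕_u I_u`. -/
def IsHomog (d : ℕ) (n : Fin d → ℕ) (I : Ideal (MvPolynomial (PPVars d n) ℂ)) : Prop :=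
  Submodule.restrictScalars ℂ I = ⨆ u : Fin d → ℕ, idealPiece d n I u

/-- The Hilbert function of `S/I`: `H_{S/I}(u) = dim S_u − dim I_u`. -/
def HF (d : ℕ) (n : Fin d → ℕ) (I : Ideal (MvPolynomial (PPVars d n) ℂ)) (u : Fin d → ℕ) : ℕ :=
  Module.finrank ℂ ↥(coxPiece d n u) - Module.finrank ℂ ↥(idealPiece d n I u)

/-- The irrelevant ideal `B(X) = ∏_{i=1}^d (α_{i0},…,α_{i n_i})`. -/
def irrel (d : ℕ) (n : Fin d → ℕ) : Ideal (MvPolynomial (PPVars d n) ℂ) :=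
  ∏ i : Fin d, Ideal.span (Set.range fun j : Fin (n i + 1) =>
    (X ⟨i, j⟩ : MvPolynomial (PPVars d n) ℂ))

/-- The ideal generated by the graded pieces `I_u` for `u ∈ ℰ`. -/
def idealFromDegrees (d : ℕ) (n : Fin d → ℕ) (I : Ideal (MvPolynomial (PPVars d n) ℂ))
    (E : Set (Fin d → ℕ)) : Ideal (MvPolynomial (PPVars d n) ℂ) :=
  Ideal.span {f | ∃ u ∈ E, f ∈ I ∧ f ∈ coxPiece d n u}

/-- The exponent of a monomial in `S_u` is bounded by `u` coordinatewise. -/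
lemma le_of_weight_eq {d : ℕ} {n : Fin d → ℕ} {m : PPVars d n →₀ ℕ} {u : Fin d → ℕ}
    (h : Finsupp.weight (wPP d n) m = u) (p : PPVars d n) : m p ≤ u p.1 := by
  rw [← h, Finsupp.weight_eq_sum, Finset.sum_apply]
  refine le_trans ?_ (Finset.single_le_sum (f := fun q => (m q • wPP d n q) p.1)
    (fun _ _ => Nat.zero_le _) (Finset.mem_univ p))
  simp [wPP]

lemma coxPiece_finite (d : ℕ) (n : Fin d → ℕ) (u : Fin d → ℕ) :
    Module.Finite ℂ ↥(coxPiece d n u) := by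
  have hle : coxPiece d n u ≤ Submodule.span ℂ
      ((fun m : PPVars d n →₀ ℕ => (monomial m (1 : ℂ))) ''
        {m | Finsupp.weight (wPP d n) m = u}) := by
    intro f hf
    rw [f.as_sum]
    refine Submodule.sum_mem _ fun m hm => ?_
    have : monomial m (coeff m f) = coeff m f • monomial m (1 : ℂ) := by
      simp [smul_monomial]
    rw [this]
    exact Submodule.smul_mem _ _ (Submodule.subset_span ⟨m, hf (mem_support_iff.1 hm), rfl⟩)
  have hfin : {m : PPVars d n →₀ ℕ | Finsupp.weight (wPP d n) m = u}.Finite := by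
    refine (Set.finite_Iic (Finsupp.equivFunOnFinite.symm fun p : PPVars d n => u p.1)).subset ?_
    intro m hm p
    exact le_of_weight_eq hm p
  have := FiniteDimensional.span_of_finite ℂ (hfin.image fun m => (monomial m (1 : ℂ)))
  exact Submodule.finiteDimensional_of_le hle

/-- The `r` monomials `α_{j0}^{u_j - r + a} α_{j1}^{r - a} ∏_{k ≠ j} α_{k0}^{u_k}`, `a < r`,
witness the bound. -/
lemma le_finrank_coxPiece {d : ℕ} {n : Fin d → ℕ} {r : ℕ} {j : Fin d} (hn : 1 ≤ n j)
    {u : Fin d → ℕ} (hu : r ≤ u j) : r ≤ Module.finrank ℂ ↥(coxPiece d n u) := by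
  classical
  have := coxPiece_finite d n u
  let q : PPVars d n := ⟨j, 0⟩
  let q' : PPVars d n := ⟨j, ⟨1, by omega⟩⟩
  let u' : Fin d → ℕ := u - Pi.single j r
  let e : Fin r → (PPVars d n →₀ ℕ) := fun a =>
    (∑ k, Finsupp.single (⟨k, 0⟩ : PPVars d n) (u' k)) + Finsupp.single q (a : ℕ) +
      Finsupp.single q' (r - a)
  have hqq : q' ≠ q := by
    intro h
    have := Sigma.mk.inj_iff.1 h
    have h2 := congrArg Fin.val (eq_of_heq this.2)
    simp at h2
  have he : Function.Injective e := by
    intro a b hab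
    have h1 : Finsupp.single q (a : ℕ) + Finsupp.single q' (r - a) =
        Finsupp.single q (b : ℕ) + Finsupp.single q' (r - b) := by
      simpa [e, add_assoc] using hab
    have h2 := DFunLike.congr_fun h1 q
    simp [hqq] at h2
    exact Fin.ext h2
  have hw : ∀ a, Finsupp.weight (wPP d n) (e a) = u := by
    intro a
    have ha := a.2
    simp only [e, map_add, map_sum, Finsupp.weight_single]
    ext k
    simp only [wPP, Pi.add_apply, Finset.sum_apply, Pi.smul_apply, smul_eq_mul, q, q', u',
      Pi.sub_apply]
    rw [Finset.sum_eq_single k (by intro b _ hb; simp [Pi.single_apply, hb.symm]) (by simp)]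
    by_cases hk : k = j
    · subst hk
      simp
      omega
    · simp [hk]
  have hli : LinearIndependent ℂ (fun a : Fin r => (monomial (e a) (1 : ℂ))) := by
    have := (basisMonomials (PPVars d n) ℂ).linearIndependent.comp e he
    simpa [Function.comp_def] using this
  have hli' : LinearIndependent ℂ (fun a : Fin r =>
      (⟨monomial (e a) (1 : ℂ), isWeightedHomogeneous_monomial _ _ _ (hw a)⟩ :
        ↥(coxPiece d n u))) :=
    LinearIndependent.of_comp (coxPiece d n u).subtype hli
  simpa using hli'.fintype_card_le_finrank

lemma mul_mem_coxPiece {d : ℕ} {n : Fin d → ℕ} {u v : Fin d → ℕ}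
    {f g : MvPolynomial (PPVars d n) ℂ} (hf : f ∈ coxPiece d n u) (hg : g ∈ coxPiece d n v) :
    f * g ∈ coxPiece d n (u + v) :=
  IsWeightedHomogeneous.mul hf hg

lemma X_mem_coxPiece {d : ℕ} {n : Fin d → ℕ} (i : Fin d) (j : Fin (n i + 1)) :
    (X ⟨i, j⟩ : MvPolynomial (PPVars d n) ℂ) ∈ coxPiece d n (Pi.single i 1) :=
  isWeightedHomogeneous_X ℂ (wPP d n) (⟨i, j⟩ : PPVars d n)

/-- `S_{u + e_i}` is spanned by the products of a variable of degree `e_i` with an element of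
`S_u`. -/
lemma coxPiece_succ_le {d : ℕ} {n : Fin d → ℕ} (i : Fin d) (u : Fin d → ℕ)
    (N : Submodule ℂ (MvPolynomial (PPVars d n) ℂ))
    (hN : ∀ (j : Fin (n i + 1)), ∀ g ∈ coxPiece d n u, X ⟨i, j⟩ * g ∈ N) :
    coxPiece d n (u + Pi.single i 1) ≤ N := by
  classical
  intro f hf
  rw [f.as_sum]
  refine Submodule.sum_mem _ fun m hm => ?_
  have hw : Finsupp.weight (wPP d n) m = u + Pi.single i 1 := hf (mem_support_iff.1 hm)
  obtain ⟨j, hj⟩ : ∃ j : Fin (n i + 1), m ⟨i, j⟩ ≠ 0 := by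
    by_contra! hall
    have h1 := congrFun hw i
    rw [Finsupp.weight_eq_sum, Finset.sum_apply, Finset.sum_eq_zero] at h1
    · simp at h1
    · rintro ⟨k, l⟩ -
      by_cases hk : k = i
      · subst hk; simp [hall]
      · simp [wPP, Ne.symm hk]
  have hm' : m = Finsupp.single ⟨i, j⟩ 1 + (m - Finsupp.single ⟨i, j⟩ 1) := by
    refine (add_tsub_cancel_of_le ?_).symm
    rw [Finsupp.single_le_iff]
    omega
  have hw' : Finsupp.weight (wPP d n) (m - Finsupp.single ⟨i, j⟩ 1) = u := by
    have h2 := hw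
    rw [hm', map_add, Finsupp.weight_single, add_comm u, one_smul] at h2
    exact add_left_cancel h2
  have hprod : monomial m (coeff m f) =
      X ⟨i, j⟩ * monomial (m - Finsupp.single ⟨i, j⟩ 1) (coeff m f) := by
    rw [X, monomial_mul, one_mul, ← hm']
  rw [hprod]
  exact hN j _ (isWeightedHomogeneous_monomial _ _ _ hw')

lemma irrel_le {d : ℕ} {n : Fin d → ℕ} (i : Fin d) :
    irrel d n ≤ Ideal.span (Set.range fun j : Fin (n i + 1) =>
      (X ⟨i, j⟩ : MvPolynomial (PPVars d n) ℂ)) :=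
  Ideal.prod_le_inf.trans (Finset.inf_le (Finset.mem_univ i))

/-- If `I` is `B(X)`-saturated, some form of degree `e_i` is a nonzerodivisor on `S/I`. Otherwise
`S_{e_i}`, a vector space over an infinite field, would be covered by the finitely many associated
primes of `S/I`, hence contained in one of them, `Ann(x̄)`; then `x·B(X) ⊆ I`, so `x ∈ I` by
saturation, a contradiction. -/
lemma exists_linear_nonzerodivisor {d : ℕ} {n : Fin d → ℕ} (i : Fin d)
    {I : Ideal (MvPolynomial (PPVars d n) ℂ)}
    (hIsat : satSet I (irrel d n) = (I : Set (MvPolynomial (PPVars d n) ℂ))) :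
    ∃ l ∈ coxPiece d n (Pi.single i 1), ∀ h, l * h ∈ I → h ∈ I := by
  by_contra! hcon
  let R := MvPolynomial (PPVars d n) ℂ
  let A := associatedPrimes R (R ⧸ I)
  have hA : A.Finite := associatedPrimes.finite R (R ⧸ I)
  have : Finite A := hA
  let V := coxPiece d n (Pi.single i 1)
  let p : A → Subspace ℂ V := fun P =>
    (Submodule.restrictScalars ℂ (P : Ideal R)).comap V.subtype
  have hcov : ⋃ P, (p P : Set V) = Set.univ := by
    rw [Set.eq_univ_iff_forall]
    rintro ⟨l, hl⟩
    obtain ⟨h, hlh, hh⟩ := hcon l hl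
    have hmem : l ∈ {r : R | ∃ x : R ⧸ I, x ≠ 0 ∧ r • x = 0} := by
      refine ⟨Ideal.Quotient.mk I h, fun h0 => hh (Ideal.Quotient.eq_zero_iff_mem.1 h0), ?_⟩
      change Ideal.Quotient.mk I (l * h) = 0
      exact Ideal.Quotient.eq_zero_iff_mem.2 hlh
    rw [← biUnion_associatedPrimes_eq_zero_divisors] at hmem
    simp only [Set.mem_iUnion] at hmem ⊢
    obtain ⟨P, hP, hlP⟩ := hmem
    exact ⟨⟨P, hP⟩, hlP⟩
  obtain ⟨⟨P, hP⟩, htop⟩ := Subspace.exists_eq_top_of_iUnion_eq_univ hcov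
  have hVP : ∀ l ∈ V, l ∈ P := fun l hl => by
    have : (⟨l, hl⟩ : V) ∈ p ⟨P, hP⟩ := htop ▸ Submodule.mem_top
    exact this
  obtain ⟨hprime, y, rfl⟩ := isAssociatedPrime_iff.1 hP
  obtain ⟨x, rfl⟩ := Ideal.Quotient.mk_surjective y
  have hann : ∀ l, l ∈ (⊥ : Submodule R (R ⧸ I)).colon {Ideal.Quotient.mk I x} → l * x ∈ I := by
    intro l hl
    rw [Submodule.mem_colon_singleton, Submodule.mem_bot] at hl
    change Ideal.Quotient.mk I (l * x) = 0 at hl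
    exact Ideal.Quotient.eq_zero_iff_mem.1 hl
  have hxI : x ∈ I := by
    have hx : x ∈ satSet I (irrel d n) := by
      refine ⟨1, fun g hg => ?_⟩
      rw [pow_one] at hg
      rw [mul_comm]
      refine hann g ((Ideal.span_le.2 ?_) (irrel_le i hg))
      rintro _ ⟨j, rfl⟩
      exact hVP _ (X_mem_coxPiece i j)
    rw [hIsat] at hx
    exact hx
  apply hprime.ne_top
  rw [Ideal.eq_top_iff_one, Submodule.mem_colon_singleton,
    Ideal.Quotient.eq_zero_iff_mem.2 hxI]
  simp

/-- Where the Hilbert function of `S/I` takes the same value `r` in degrees `v` and `v + e_i`,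
multiplication by a nonzerodivisor `l` is an isomorphism `(S/I)_v ≃ (S/I)_{v + e_i}`; only its
surjectivity is recorded. -/
lemma coxPiece_le_sup {d : ℕ} {n : Fin d → ℕ} {i : Fin d} {r : ℕ} {v : Fin d → ℕ}
    {I : Ideal (MvPolynomial (PPVars d n) ℂ)} {l : MvPolynomial (PPVars d n) ℂ} (hl0 : l ≠ 0)
    (hl : l ∈ coxPiece d n (Pi.single i 1)) (hreg : ∀ h, l * h ∈ I → h ∈ I)
    (h1 : HF d n I v = r) (h2 : HF d n I (v + Pi.single i 1) = r) :
    coxPiece d n (v + Pi.single i 1) ≤ idealPiece d n I (v + Pi.single i 1) ⊔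
      (coxPiece d n v).map (LinearMap.mulLeft ℂ l) := by
  have f1 := coxPiece_finite d n v
  have f2 := coxPiece_finite d n (v + Pi.single i 1)
  have le1 : idealPiece d n I v ≤ coxPiece d n v := inf_le_right
  have le2 : idealPiece d n I (v + Pi.single i 1) ≤ coxPiece d n (v + Pi.single i 1) :=
    inf_le_right
  have f3 := Submodule.finiteDimensional_of_le le1
  have f4 := Submodule.finiteDimensional_of_le le2
  have le3 : (coxPiece d n v).map (LinearMap.mulLeft ℂ l) ≤
      coxPiece d n (v + Pi.single i 1) := by
    rintro _ ⟨g, hg, rfl⟩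
    rw [LinearMap.mulLeft_apply, mul_comm]
    exact mul_mem_coxPiece hg hl
  have hinj : Function.Injective (LinearMap.mulLeft ℂ l) := fun a b hab =>
    mul_left_cancel₀ hl0 hab
  have hinf : idealPiece d n I (v + Pi.single i 1) ⊓
      (coxPiece d n v).map (LinearMap.mulLeft ℂ l) ≤
      (idealPiece d n I v).map (LinearMap.mulLeft ℂ l) := by
    rintro _ ⟨⟨ha, -⟩, g, hg, rfl⟩
    exact ⟨g, ⟨hreg g ha, hg⟩, rfl⟩
  have e1 := Submodule.finrank_sup_add_finrank_inf_eq (idealPiece d n I (v + Pi.single i 1))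
    ((coxPiece d n v).map (LinearMap.mulLeft ℂ l))
  have e2 := Submodule.finrank_mono hinf
  have e3 := (Submodule.equivMapOfInjective _ hinj (coxPiece d n v)).finrank_eq
  have e4 := (Submodule.equivMapOfInjective _ hinj (idealPiece d n I v)).finrank_eq
  have e5 := Submodule.finrank_mono le1
  have e6 := Submodule.finrank_mono le2
  unfold HF at h1 h2
  refine (Submodule.eq_of_le_of_finrank_le (sup_le le2 le3) ?_).ge
  omega

lemma idealFromDegrees_le {d : ℕ} {n : Fin d → ℕ} {I : Ideal (MvPolynomial (PPVars d n) ℂ)}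
    {E : Set (Fin d → ℕ)} : idealFromDegrees d n I E ≤ I :=
  Ideal.span_le.2 fun _ ⟨_, _, h, _⟩ => h

/-- In degrees whose `j`-th coordinate is at least `r`, for some `j ≠ i`, the ideal `I` is
generated by its pieces of `i`-th degree at most `1`. -/
lemma idealPiece_le_of_large {d : ℕ} {n : Fin d → ℕ} {r : ℕ} (hr : 1 ≤ r) {i j : Fin d}
    (hij : j ≠ i) (hn : 1 ≤ n j) {I : Ideal (MvPolynomial (PPVars d n) ℂ)}
    (hIsat : satSet I (irrel d n) = (I : Set (MvPolynomial (PPVars d n) ℂ)))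
    (hIHF : ∀ u : Fin d → ℕ, HF d n I u = min (Module.finrank ℂ ↥(coxPiece d n u)) r)
    (u : Fin d → ℕ) (hu : r ≤ u j) :
    idealPiece d n I u ≤
      Submodule.restrictScalars ℂ (idealFromDegrees d n I {u : Fin d → ℕ | u i ≤ 1}) := by
  obtain ⟨l, hl, hreg⟩ := exists_linear_nonzerodivisor i hIsat
  have hHF : ∀ u : Fin d → ℕ, r ≤ u j → HF d n I u = r := fun u hu => by
    rw [hIHF, min_eq_right (le_finrank_coxPiece hn hu)]
  have hl0 : l ≠ 0 := by
    rintro rfl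
    have hI : I = ⊤ := (Ideal.eq_top_iff_one I).2 (hreg 1 (by simp))
    have h := hHF u hu
    have : idealPiece d n I u = coxPiece d n u := by
      rw [idealPiece, hI]; simp
    rw [HF, this, Nat.sub_self] at h
    omega
  set J := idealFromDegrees d n I {u : Fin d → ℕ | u i ≤ 1} with hJ
  have key : ∀ k : ℕ, ∀ u : Fin d → ℕ, r ≤ u j → u i = k + 1 →
      idealPiece d n I u ≤ Submodule.restrictScalars ℂ J := by
    intro k
    induction k with
    | zero =>
      rintro u - hui f ⟨hfI, hfu⟩
      exact Ideal.subset_span ⟨u, by simp [hui], hfI, hfu⟩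
    | succ k ih =>
      intro u huj hui
      obtain ⟨v, rfl⟩ : ∃ v : Fin d → ℕ, u = v + Pi.single i 1 + Pi.single i 1 := by
        refine ⟨u - Pi.single i 2, ?_⟩
        ext a
        by_cases ha : a = i
        · subst ha; simp; omega
        · simp [ha]
      have hvj : r ≤ v j := by simpa [hij] using huj
      have hwj : r ≤ (v + Pi.single i 1 : Fin d → ℕ) j := by simpa [hij] using hvj
      have hwi : (v + Pi.single i 1 : Fin d → ℕ) i = k + 1 := by simpa using hui
      have hIw := ih _ hwj hwi
      have hsup := coxPiece_le_sup hl0 hl hreg (hHF v hvj) (hHF _ hwj)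
      have hdec : coxPiece d n (v + Pi.single i 1 + Pi.single i 1) ≤
          Submodule.restrictScalars ℂ J ⊔
            (coxPiece d n (v + Pi.single i 1)).map (LinearMap.mulLeft ℂ l) := by
        refine coxPiece_succ_le i _ _ fun a g hg => ?_
        obtain ⟨p, hp, _, ⟨h, hh, rfl⟩, rfl⟩ := Submodule.mem_sup.1 (hsup hg)
        rw [mul_add]
        refine Submodule.add_mem_sup (J.mul_mem_left _ (hIw hp)) ⟨X ⟨i, a⟩ * h, ?_, ?_⟩
        · rw [mul_comm]
          exact mul_mem_coxPiece hh (X_mem_coxPiece i a)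
        · simp only [LinearMap.mulLeft_apply]
          ring
      rintro f ⟨hfI, hfu⟩
      obtain ⟨p, hp, _, ⟨h, hh, rfl⟩, rfl⟩ := Submodule.mem_sup.1 (hdec hfu)
      have hlh : l * h ∈ I := (I.add_mem_iff_right (idealFromDegrees_le hp)).1 hfI
      exact J.add_mem hp (J.mul_mem_left _ (hIw ⟨hreg h hlh, hh⟩))
  rcases Nat.eq_zero_or_pos (u i) with h0 | hpos
  · rintro f ⟨hfI, hfu⟩
    exact Ideal.subset_span ⟨u, by simp [h0], hfI, hfu⟩
  · exact key (u i - 1) u hu (by omega)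

/-- The `(r,X)`-sufficiency of `ℰ_i = {u ∈ ℕ^d : u_i ≤ 1}` (proof of Corollary 5.9): a
`B(X)`-saturated homogeneous ideal of `r` points in general position in a product of at least two
projective spaces is determined by its graded pieces in degrees whose `i`-th coordinate is at
most `1`. -/
theorem sufficiency_of_low_ith_degrees (r d : ℕ) (hr : 1 ≤ r) (hd : 2 ≤ d)
    (n : Fin d → ℕ) (hn : ∀ i, 1 ≤ n i) (i : Fin d)
    (I : Ideal (MvPolynomial (PPVars d n) ℂ))
    (hIhom : IsHomog d n I)
    (hIsat : satSet I (irrel d n) = (I : Set (MvPolynomial (PPVars d n) ℂ)))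
    (hIHF : ∀ u : Fin d → ℕ, HF d n I u = min (Module.finrank ℂ ↥(coxPiece d n u)) r) :
    satSet (idealFromDegrees d n I {u : Fin d → ℕ | u i ≤ 1}) (irrel d n) =
      (I : Set (MvPolynomial (PPVars d n) ℂ)) := by
  obtain ⟨j, hij⟩ : ∃ j : Fin d, j ≠ i := by
    have : Nontrivial (Fin d) := Fin.nontrivial_iff_two_le.2 hd
    exact exists_ne i
  set J := idealFromDegrees d n I {u : Fin d → ℕ | u i ≤ 1} with hJ
  apply Set.Subset.antisymm
  · rintro x ⟨k, hk⟩
    rw [← hIsat]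
    exact ⟨k, fun g hg => idealFromDegrees_le (hk g hg)⟩
  intro x hx
  -- Each factor from the ideal of the `j`-th variables raises the `j`-th degree by one, until
  -- it reaches `r`.
  have hpow : ∀ s : ℕ, ∀ u : Fin d → ℕ, r ≤ u j + s → ∀ f ∈ idealPiece d n I u,
      ∀ g ∈ (Ideal.span (Set.range fun a : Fin (n j + 1) =>
        (X ⟨j, a⟩ : MvPolynomial (PPVars d n) ℂ))) ^ s, f * g ∈ J := by
    intro s
    induction s with
    | zero =>
      intro u hu f hf g _
      exact J.mul_mem_right _ (idealPiece_le_of_large hr hij (hn j) hIsat hIHF u hu hf)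
    | succ s ih =>
      intro u hu f hf g hg
      have hle : (Ideal.span (Set.range fun a : Fin (n j + 1) =>
          (X ⟨j, a⟩ : MvPolynomial (PPVars d n) ℂ))) ^ (s + 1) ≤
          Submodule.comap (LinearMap.mulLeft _ f) J := by
        rw [pow_succ', Ideal.mul_le]
        intro a ha b hb
        rw [Submodule.mem_comap, LinearMap.mulLeft_apply]
        refine Submodule.span_induction (p := fun a _ => f * (a * b) ∈ J) ?_ ?_ ?_ ?_ ha
        · rintro _ ⟨c, rfl⟩
          rw [← mul_assoc]
          refine ih (u + Pi.single j 1) (by simp; omega) _ ⟨?_, ?_⟩ b hb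
          · exact I.mul_mem_right _ hf.1
          · exact mul_mem_coxPiece hf.2 (X_mem_coxPiece j c)
        · simp
        · intro y z _ _ hy hz
          rw [add_mul, mul_add]
          exact J.add_mem hy hz
        · intro c y _ hy
          have : f * (c • y * b) = c * (f * (y * b)) := by rw [smul_eq_mul]; ring
          rw [this]
          exact J.mul_mem_left _ hy
      exact hle hg
  have hx' : x ∈ ⨆ u : Fin d → ℕ, idealPiece d n I u := hIhom ▸ hx
  refine ⟨r, fun g hg => ?_⟩
  refine Submodule.iSup_induction _ (motive := fun y => y * g ∈ J) hx' ?_ (by simp) ?_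
  · intro u f hf
    exact hpow r u (by omega) f hf g (Ideal.pow_right_mono (irrel_le j) r hg)
  · intro y z hy hz
    rw [add_mul]
    exact J.add_mem hy hz
end
end

section
/- Let d ≥ 1, n_1,…,n_d ≥ 1, X = ℙ^{n_1}×⋯×ℙ^{n_d} with Cox ring S and irrelevant ideal B(X) as in the context. If I ⊆ S is a homogeneous ideal such that dim_ℂ (S/I)_u = 1 for every u ∈ ℕ^d (i.e. H_{S/I} = h_{1,X}), then I is B(X)-saturated and I is a radical ideal. -/
open MvPolynomial

noncomputable section

/-!
The Hilbert function at the degree `e_i` is `1`, so some variable `X_{i,j_i}` lies outside `I`, and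
every other `X_{ij}` is congruent modulo `I` to a scalar multiple `a_{ij} X_{i,j_i}`
(`exists_sub_smul_mem`). Geometrically, the `a_{ij}` are the coordinates of a point of `X`, and `I`
is the ideal of that point, namely the kernel of

  `φ : S → ℂ[t_1,…,t_d]`, `α_{ij} ↦ a_{ij} t_i` (`pointMap`).

Indeed, let `ψ` send `t_i` to `X_{i,j_i}`. Then `f ≡ ψ (φ f)` modulo `I` for all `f`
(`sub_section_mem`), whence `ker φ ⊆ I`. Conversely `φ` sends `S_u` into the line spanned by `t^u`
(`pointMap_coxPiece`), so if some `f ∈ I_u` had `φ f ≠ 0`, then `ψ (t^u)` would be in `I`, and hence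
all of `S_u` would be, contradicting `H_{S/I}(u) = 1`. As `ℂ[t_1,…,t_d]` is a domain, `I` is prime,
so radical; and the element `∏ X_{i,j_i}` of the irrelevant ideal is not in `I`, so a prime `I` is
saturated.
-/

/-- If `Q ⊆ P` has codimension one, then any element of `P` outside `Q` spans `P` modulo `Q`.
Finite-dimensionality of `P` is implied, since otherwise its `finrank` would be `0`. -/
lemma exists_sub_smul_mem {V : Type*} [AddCommGroup V] [Module ℂ V] (P Q : Submodule ℂ V)
    (hQP : Q ≤ P) (h : Module.finrank ℂ P - Module.finrank ℂ Q = 1) {x : V} (hx : x ∈ P)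
    (hxQ : x ∉ Q) {y : V} (hy : y ∈ P) : ∃ c : ℂ, y - c • x ∈ Q := by
  have : FiniteDimensional ℂ P := Module.finite_of_finrank_pos (by omega)
  have h1 := Submodule.finrank_quotient_add_finrank (Q.submoduleOf P)
  rw [(Submodule.submoduleOfEquivOfLe hQP).finrank_eq] at h1
  have h2 : Module.finrank ℂ (P ⧸ Q.submoduleOf P) = 1 := by omega
  have hne : (Q.submoduleOf P).mkQ ⟨x, hx⟩ ≠ 0 := by
    rw [Submodule.mkQ_apply, Ne, Submodule.Quotient.mk_eq_zero]
    exact hxQ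
  obtain ⟨c, hc⟩ := (finrank_eq_one_iff_of_nonzero' _ hne).1 h2 ((Q.submoduleOf P).mkQ ⟨y, hy⟩)
  refine ⟨c, ?_⟩
  rw [← map_smul, eq_comm, ← sub_eq_zero, ← map_sub, Submodule.mkQ_apply,
    Submodule.Quotient.mk_eq_zero] at hc
  exact hc

lemma not_coxPiece_le {d : ℕ} {n : Fin d → ℕ} {I : Ideal (MvPolynomial (PPVars d n) ℂ)}
    {u : Fin d → ℕ} (h : HF d n I u = 1) :
    ¬ coxPiece d n u ≤ Submodule.restrictScalars ℂ I := by
  intro hle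
  have : idealPiece d n I u = coxPiece d n u := inf_eq_right.2 hle
  rw [HF, this] at h
  omega

/-- The map `φ : α_{ij} ↦ a_{ij} t_i`, which evaluates a polynomial at the points
`(t_i a_{ij})`, that is, at all multi-rescalings of the coordinate vector `a`. -/
def pointMap {d : ℕ} {n : Fin d → ℕ} (a : PPVars d n → ℂ) :
    MvPolynomial (PPVars d n) ℂ →ₐ[ℂ] MvPolynomial (Fin d) ℂ :=
  aeval fun p => C (a p) * X p.1

lemma weight_wPP {d : ℕ} {n : Fin d → ℕ} (s : PPVars d n →₀ ℕ) (i : Fin d) :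
    Finsupp.weight (wPP d n) s i = ∑ j : Fin (n i + 1), s ⟨i, j⟩ := by
  rw [Finsupp.weight_apply, Finsupp.sum_fintype _ _ (by simp), Fintype.sum_sigma, Finset.sum_apply,
    Finset.sum_eq_single i]
  · simp [wPP]
  · intro b _ hb
    simp [wPP, Pi.single_eq_of_ne' hb]
  · simp

/-- `φ` maps the degree-`u` component of the Cox ring into the line spanned by `t^u`. -/
lemma pointMap_coxPiece {d : ℕ} {n : Fin d → ℕ} (a : PPVars d n → ℂ) (u : Fin d → ℕ)
    {f : MvPolynomial (PPVars d n) ℂ} (hf : f ∈ coxPiece d n u) :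
    ∃ c : ℂ, pointMap a f = C c * ∏ i, X i ^ u i := by
  have hf' : IsWeightedHomogeneous (wPP d n) f u := hf
  suffices h : pointMap a f ∈ Submodule.span ℂ {∏ i : Fin d, (X i : MvPolynomial (Fin d) ℂ) ^ u i} by
    obtain ⟨c, hc⟩ := Submodule.mem_span_singleton.1 h
    exact ⟨c, by rw [← hc, smul_eq_C_mul]⟩
  rw [f.as_sum, map_sum]
  refine Submodule.sum_mem _ fun s hs => Submodule.mem_span_singleton.2
    ⟨coeff s f * ∏ p, a p ^ s p, ?_⟩
  have hw : ∀ i, ∑ j : Fin (n i + 1), s ⟨i, j⟩ = u i := fun i => by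
    rw [← weight_wPP, hf' (mem_support_iff.1 hs)]
  rw [pointMap, aeval_monomial, Finsupp.prod_fintype _ _ (by simp), smul_eq_C_mul]
  simp only [mul_pow, Finset.prod_mul_distrib, map_mul, map_prod, map_pow, algebraMap_eq]
  rw [Fintype.prod_sigma (fun p : PPVars d n => (X p.1 : MvPolynomial (Fin d) ℂ) ^ s p)]
  simp only [Finset.prod_pow_eq_pow_sum, hw, mul_assoc]

/-- Substituting `X_{i,j_i}` for `t_i` inverts `φ` modulo `I`. -/
lemma sub_section_mem {d : ℕ} {n : Fin d → ℕ} {I : Ideal (MvPolynomial (PPVars d n) ℂ)}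
    (a : PPVars d n → ℂ) (j : ∀ i, Fin (n i + 1))
    (ha : ∀ p : PPVars d n, X p - a p • X ⟨p.1, j p.1⟩ ∈ I) (f : MvPolynomial (PPVars d n) ℂ) :
    f - aeval (fun i => (X ⟨i, j i⟩ : MvPolynomial (PPVars d n) ℂ)) (pointMap a f) ∈ I := by
  rw [← Ideal.Quotient.mk_eq_mk_iff_sub_mem]
  have : Ideal.Quotient.mkₐ ℂ I = (Ideal.Quotient.mkₐ ℂ I).comp
      ((aeval fun i => (X ⟨i, j i⟩ : MvPolynomial (PPVars d n) ℂ)).comp (pointMap a)) := by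
    ext p
    have := (Ideal.Quotient.mk_eq_mk_iff_sub_mem _ _).2 (ha p)
    simpa [pointMap, smul_eq_C_mul, algebraMap_eq] using this
  exact DFunLike.congr_fun this f

/-- A homogeneous ideal of the Cox ring of a product of projective spaces whose quotient has
Hilbert function `h_{1,X} ≡ 1` is `B(X)`-saturated and radical. -/
theorem hilbert_function_one_implies_saturated_and_radical
    (d : ℕ) (hd : 1 ≤ d) (n : Fin d → ℕ) (hn : ∀ i, 1 ≤ n i)
    (I : Ideal (MvPolynomial (PPVars d n) ℂ))
    (hhom : IsHomog d n I)
    (hHF : ∀ u : Fin d → ℕ, HF d n I u = 1) :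
    satSet I (irrel d n) = (I : Set (MvPolynomial (PPVars d n) ℂ)) ∧ I.radical = I := by
  have hX : ∀ p : PPVars d n, (X p : MvPolynomial (PPVars d n) ℂ) ∈ coxPiece d n (Pi.single p.1 1) :=
    fun p => isWeightedHomogeneous_X ℂ (wPP d n) p
  have hj : ∀ i, ∃ j : Fin (n i + 1), (X ⟨i, j⟩ : MvPolynomial (PPVars d n) ℂ) ∉ I := by
    intro i
    by_contra! hall
    refine not_coxPiece_le (hHF (Pi.single i 1)) fun f hf => ?_
    have hf' : IsWeightedHomogeneous (wPP d n) f (Pi.single i 1) := hf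
    change f ∈ I
    rw [f.as_sum]
    refine I.sum_mem fun s hs => ?_
    -- A monomial of degree `e_i` is divisible by some `X_{ij}`.
    have hw : ∑ j : Fin (n i + 1), s ⟨i, j⟩ = 1 := by
      rw [← weight_wPP, hf' (mem_support_iff.1 hs), Pi.single_eq_same]
    obtain ⟨j, -, hj⟩ := Finset.exists_ne_zero_of_sum_ne_zero (hw.trans_ne one_ne_zero)
    exact I.mem_of_dvd (X_dvd_monomial.2 (Or.inr hj)) (hall j)
  choose j hj using hj
  have ha : ∀ p : PPVars d n, ∃ c : ℂ,
      (X p - c • X ⟨p.1, j p.1⟩ : MvPolynomial (PPVars d n) ℂ) ∈ I := by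
    intro p
    obtain ⟨c, hc⟩ := exists_sub_smul_mem (coxPiece d n (Pi.single p.1 1))
      (idealPiece d n I (Pi.single p.1 1)) inf_le_right (hHF _) (hX ⟨p.1, j p.1⟩)
      (fun h => hj p.1 h.1) (hX p)
    exact ⟨c, hc.1⟩
  choose a ha using ha
  have ha0 : ∀ i, a ⟨i, j i⟩ ≠ 0 := fun i h0 => hj i (by simpa [h0] using ha ⟨i, j i⟩)
  have hsec := sub_section_mem a j ha
  have hker : I = RingHom.ker (pointMap a) := by
    apply le_antisymm
    · suffices h : Submodule.restrictScalars ℂ I ≤ LinearMap.ker (pointMap a).toLinearMap from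
        fun f hf => h hf
      rw [hhom]
      refine iSup_le fun u f hf => ?_
      obtain ⟨c, hc⟩ := pointMap_coxPiece a u hf.2
      have hfI : f ∈ I := hf.1
      change pointMap a f = 0
      by_contra hne
      have hc0 : c ≠ 0 := by
        rintro rfl
        simp [hc] at hne
      have hm : aeval (fun i => (X ⟨i, j i⟩ : MvPolynomial (PPVars d n) ℂ))
          (∏ i, X i ^ u i : MvPolynomial (Fin d) ℂ) ∈ I := by
        have h := (I.sub_mem_iff_right hfI).1 (hsec f)
        rw [hc, map_mul, aeval_C, algebraMap_eq] at h
        exact (I.unit_mul_mem_iff_mem (hc0.isUnit.map C)).1 h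
      refine not_coxPiece_le (hHF u) fun g hg => ?_
      obtain ⟨c', hc'⟩ := pointMap_coxPiece a u hg
      have h := hsec g
      rw [hc', map_mul] at h
      exact (I.sub_mem_iff_left (I.mul_mem_left _ hm)).1 h
    · intro f hf
      have h := hsec f
      rwa [(RingHom.mem_ker).1 hf, map_zero, sub_zero] at h
  have hprime : I.IsPrime := hker ▸ RingHom.ker_isPrime _
  refine ⟨Set.Subset.antisymm ?_ fun f hf => ⟨0, fun g _ => I.mul_mem_right g hf⟩, hprime.radical⟩
  rintro f ⟨k, hk⟩
  have hm : (∏ i, X ⟨i, j i⟩ : MvPolynomial (PPVars d n) ℂ) ∈ irrel d n :=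
    Ideal.prod_mem_prod fun i _ => Ideal.subset_span ⟨j i, rfl⟩
  refine (hprime.mem_or_mem (hk _ (Ideal.pow_mem_pow hm k))).resolve_right fun h => ?_
  obtain ⟨i, -, hi⟩ := (hprime.prod_mem_iff).1 (hprime.mem_of_pow_mem k h)
  exact hj i hi
end
end
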